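/- arXiv:math/0110204 — 7 statements merged into one kernel-verified Lean document; each statement's English description precedes it below -/
import Mathlib

section
/- There is no injective group homomorphism from the symmetric group on 4 letters into GL(2, ℂ). (This is the group-theoretic content of the paper's Lemma that the octahedral subgroup K = S₄ of PGL(2, ℂ) is of non-splitting type: a splitting would give a lifting of S₄ to a subgroup of GL(2, ℂ) isomorphic to S₄, which is impossible.) -/
/-- There is no injective group homomorphism from the symmetric group on 4 letters
into `GL(2, ℂ)`. -/
theorem no_injective_hom_S4_to_GL2C :
    ¬ ∃ f : Equiv.Perm (Fin 4) →* GL (Fin 2) ℂ, Function.Injective f := by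
  rintro ⟨f, hf⟩
  obtain ⟨a, b, c, d, haa, hc, hd, hab⟩ : ∃ a b c d : Equiv.Perm (Fin 4),
      a * a = 1 ∧ c * a = b * c ∧ d * a = (a * b) * d ∧ a ≠ b :=
    ⟨Equiv.swap 0 1 * Equiv.swap 2 3, Equiv.swap 0 2 * Equiv.swap 1 3,
      Equiv.swap 1 2, Equiv.swap 1 3, by decide, by decide, by decide, by decide⟩
  have haa' := congrArg f haa
  have hc' := congrArg f hc
  have hd' := congrArg f hd
  simp only [map_mul, map_one] at haa' hc' hd'
  -- the determinants of the three conjugate involutions agree, hence equal `1`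
  have e1 := congrArg Matrix.GeneralLinearGroup.det hc'
  have e2 := congrArg Matrix.GeneralLinearGroup.det hd'
  simp only [map_mul] at e1 e2
  rw [mul_comm] at e1 e2
  have e1 := mul_right_cancel e1
  have e2 := mul_right_cancel e2
  rw [← e1] at e2
  have hdet : Matrix.GeneralLinearGroup.det (f a) = 1 := by simpa using e2
  have hdet' : (f a).val.det = 1 := by
    simpa using congrArg Units.val hdet
  have hM : (f a).val * (f a).val = 1 := by
    simpa using congrArg Units.val haa'
  -- `f a` is its own adjugate, so it is scalar
  have hadj : (f a).val = (f a).val.adjugate := by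
    have h := Matrix.mul_adjugate (f a).val
    rw [hdet', one_smul] at h
    calc (f a).val = (f a).val * ((f a).val * (f a).val.adjugate) := by rw [h, mul_one]
      _ = _ := by rw [← mul_assoc, hM, one_mul]
  rw [Matrix.adjugate_fin_two] at hadj
  have h00 := congrFun (congrFun hadj 0) 0
  have h01 := congrFun (congrFun hadj 0) 1
  have h10 := congrFun (congrFun hadj 1) 0
  simp [self_eq_neg] at h00 h01 h10
  have hcomm : f c * f a = f a * f c := by
    ext i j
    fin_cases i <;> fin_cases j <;>
      simp [Matrix.mul_apply, Fin.sum_univ_two, h00, h01, h10, mul_comm]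
  rw [hcomm] at hc'
  exact hab (hf (mul_right_cancel hc'))
end

section
/- There is no injective group homomorphism from the alternating group on 4 letters into GL(2, ℂ). (This is the group-theoretic content of the paper's Lemma that the tetrahedral subgroup K = A₄ of PGL(2, ℂ) is of non-splitting type.) -/
theorem aux_key (A B C D : Matrix (Fin 2) (Fin 2) ℂ) (hCD : D * C = 1)
    (hA : A * A = 1) (hB : B * B = 1)
    (h1 : C * A * D = B) (h2 : C * B * D = A * B) : A = B := by
  have hdCD : C.det * D.det = 1 := by
    rw [mul_comm, ← Matrix.det_mul, hCD, Matrix.det_one]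
  have hdB : B.det = A.det := by
    rw [← h1, Matrix.det_mul, Matrix.det_mul]; linear_combination A.det * hdCD
  have hdAB : A.det * B.det = B.det := by
    rw [← Matrix.det_mul, ← h2, Matrix.det_mul, Matrix.det_mul]
    linear_combination B.det * hdCD
  have hdA2 : A.det * A.det = 1 := by rw [← Matrix.det_mul, hA, Matrix.det_one]
  have hA1 : A.det = 1 := by rw [hdB] at hdAB; rw [← hdAB, hdA2]
  have hB1 : B.det = 1 := hdB.trans hA1
  have htr : B.trace = A.trace := by
    rw [← h1, Matrix.trace_mul_comm, ← mul_assoc, hCD, one_mul]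
  have key : ∀ M : Matrix (Fin 2) (Fin 2) ℂ, M * M = 1 → M.det = 1 →
      M.trace • M = (2 : ℂ) • (1 : Matrix (Fin 2) (Fin 2) ℂ) := by
    intro M hM hd
    rw [Matrix.det_fin_two] at hd
    have e := fun i j => congrFun (congrFun hM i) j
    have e00 := e 0 0
    have e01 := e 0 1
    have e10 := e 1 0
    have e11 := e 1 1
    simp [Matrix.mul_apply, Fin.sum_univ_two] at e00 e01 e10 e11
    ext i j
    fin_cases i <;> fin_cases j <;> simp [Matrix.trace_fin_two, -mul_eq_zero]
    · linear_combination e00 + hd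
    · linear_combination e01
    · linear_combination e10
    · linear_combination e11 + hd
  have kA := key A hA hA1
  have kB := key B hB hB1
  rw [htr] at kB
  have ht : A.trace ≠ 0 := by
    intro h
    rw [h, zero_smul] at kA
    have := congrFun (congrFun kA 0) 0
    simp at this
  exact smul_right_injective _ ht (kA.trans kB.symm)

/-- There is no injective group homomorphism from the alternating group on 4 letters
into `GL(2, ℂ)`. -/
theorem no_injective_hom_A4_to_GL2C :
    ¬ ∃ f : (alternatingGroup (Fin 4)) →* GL (Fin 2) ℂ, Function.Injective f := by
  rintro ⟨f, hf⟩
  have hex : ∃ a b c : alternatingGroup (Fin 4), a ≠ b ∧ a * a = 1 ∧ b * b = 1 ∧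
      c * a * c⁻¹ = b ∧ c * b * c⁻¹ = a * b := by
    refine ⟨⟨Equiv.swap 0 1 * Equiv.swap 2 3, Equiv.Perm.mem_alternatingGroup.mpr (by decide)⟩,
      ⟨Equiv.swap 0 2 * Equiv.swap 1 3, Equiv.Perm.mem_alternatingGroup.mpr (by decide)⟩,
      ⟨Equiv.swap 1 2 * Equiv.swap 2 3, Equiv.Perm.mem_alternatingGroup.mpr (by decide)⟩, ?_, ?_, ?_, ?_, ?_⟩ <;> decide
  obtain ⟨a, b, c, hab, ha, hb, h1, h2⟩ := hex
  apply hab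
  apply hf
  apply Units.ext
  refine aux_key _ _ (f c).val (f c⁻¹).val ?_ ?_ ?_ ?_ ?_
  · rw [← Units.val_mul, ← map_mul, inv_mul_cancel, map_one, Units.val_one]
  · rw [← Units.val_mul, ← map_mul, ha, map_one, Units.val_one]
  · rw [← Units.val_mul, ← map_mul, hb, map_one, Units.val_one]
  · rw [← Units.val_mul, ← map_mul, ← Units.val_mul, ← map_mul, h1]
  · rw [← Units.val_mul, ← map_mul, ← Units.val_mul, ← map_mul, h2, map_mul, Units.val_mul]
end

section
/- Let n ≥ 1 be an integer and let ξ = exp(2πi/n). There exists an injective group homomorphism ε from the dihedral group of order 2n into GL(2, ℂ) such that ε sends the rotation generator to a nonzero scalar multiple of the diagonal matrix diag(1, ξ) and the reflection generator to a nonzero scalar multiple of the matrix [[0,1],[1,0]], if and only if n is odd. (Lemma: the dihedral subgroup D_n of PGL(2, ℂ) is splitting if and only if n is odd.) -/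
/-- The matrix representation of the dihedral group attached to `k : ZMod n`. -/
noncomputable def dihMat (n : ℕ) [NeZero n] (k : ZMod n) :
    DihedralGroup n → Matrix (Fin 2) (Fin 2) ℂ
  | .r i => !![ZMod.stdAddChar (k * i), 0; 0, ZMod.stdAddChar (-(k * i))]
  | .sr i => !![0, ZMod.stdAddChar (-(k * i)); ZMod.stdAddChar (k * i), 0]

/-- `dihMat` as a monoid homomorphism. -/
noncomputable def dihHom (n : ℕ) [NeZero n] (k : ZMod n) :
    DihedralGroup n →* Matrix (Fin 2) (Fin 2) ℂ where
  toFun := dihMat n k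
  map_one' := by
    rw [DihedralGroup.one_def]
    simp [dihMat, Matrix.one_fin_two]
  map_mul' := by
    rintro (i | i) (j | j) <;>
    simp [dihMat, ← AddChar.map_add_eq_mul] <;> (constructor <;> congr 1 <;> ring)

theorem dihHom_injective (n : ℕ) [NeZero n] (k : ZMod n) (hk : 2 * k = -1) :
    Function.Injective (dihHom n k) := by
  have key : ∀ i j : ZMod n, (ZMod.stdAddChar (k * i) : ℂ) = ZMod.stdAddChar (k * j) → i = j := by
    intro i j h
    have h2 := ZMod.injective_stdAddChar h
    linear_combination (-2) * h2 + (i - j) * hk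
  have hne : ∀ i : ZMod n, (ZMod.stdAddChar i : ℂ) ≠ 0 := fun i => by
    rw [ZMod.stdAddChar_apply]; exact Circle.coe_ne_zero _
  rintro (i | i) (j | j) h
  · have := congrFun (congrFun h 0) 0
    rw [key i j (by simpa [dihHom, dihMat] using this)]
  · have := congrFun (congrFun h 0) 0
    exact absurd (by simpa [dihHom, dihMat] using this) (hne (k * i))
  · have := congrFun (congrFun h 0) 0
    exact absurd (by simpa [dihHom, dihMat] using this.symm) (hne (k * j))
  · have := congrFun (congrFun h 1) 0
    rw [key i j (by simpa [dihHom, dihMat] using this)]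

/-- Let `n ≥ 1` and `ξ = exp(2πi/n)`.  There is an injective group homomorphism `ε`
from the dihedral group of order `2n` into `GL(2, ℂ)` sending the rotation generator
to a nonzero scalar multiple of `diag(1, ξ)` and the reflection generator to a nonzero
scalar multiple of `[[0,1],[1,0]]`, if and only if `n` is odd. -/
theorem dihedral_lifting_iff_odd (n : ℕ) (hn : 1 ≤ n) :
    (∃ ε : DihedralGroup n →* GL (Fin 2) ℂ, Function.Injective ε ∧
      (∃ c : ℂ, c ≠ 0 ∧ (ε (DihedralGroup.r 1) : Matrix (Fin 2) (Fin 2) ℂ) =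
        c • Matrix.diagonal ![1, Complex.exp (2 * Real.pi * Complex.I / n)]) ∧
      (∃ c : ℂ, c ≠ 0 ∧ (ε (DihedralGroup.sr 0) : Matrix (Fin 2) (Fin 2) ℂ) =
        c • !![0, 1; 1, 0])) ↔ Odd n := by
  have : NeZero n := ⟨by omega⟩
  have hn0 : (n : ℂ) ≠ 0 := by exact_mod_cast (NeZero.ne n)
  constructor
  · rintro ⟨ε, -, ⟨c, hc, hr⟩, ⟨d, hd, hs⟩⟩
    by_contra hodd
    rw [Nat.not_odd_iff_even] at hodd
    obtain ⟨m, hm⟩ := hodd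
    set ξ := Complex.exp (2 * Real.pi * Complex.I / n) with hξ
    have h1 : c ^ n = 1 := by
      have h : (DihedralGroup.r 1 : DihedralGroup n) ^ n = 1 := DihedralGroup.r_one_pow_n
      have h' := congrArg (fun g => ((ε g : GL (Fin 2) ℂ) : Matrix (Fin 2) (Fin 2) ℂ)) h
      simp only [map_pow, map_one, Units.val_pow_eq_pow_val, Units.val_one, hr, smul_pow,
        Matrix.diagonal_pow] at h'
      simpa using congrFun (congrFun h' 0) 0
    have h2 : c ^ 2 * ξ = 1 := by
      have h : (DihedralGroup.sr 0 : DihedralGroup n) * .r 1 * .sr 0 * .r 1 = .sr 0 * .sr 0 := by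
        simp
      have h' := congrArg (fun g => ((ε g : GL (Fin 2) ℂ) : Matrix (Fin 2) (Fin 2) ℂ)) h
      simp only [map_mul, Units.val_mul, hr, hs] at h'
      have h'' := congrFun (congrFun h' 0) 0
      simp [Matrix.mul_apply, Fin.sum_univ_two, Matrix.diagonal, Matrix.vecHead, Matrix.vecTail] at h''
      have : d * d ≠ 0 := mul_ne_zero hd hd
      apply mul_left_cancel₀ this
      linear_combination h''
    have h3 : ξ ^ m = -1 := by
      rw [hξ, ← Complex.exp_nat_mul, ← Complex.exp_pi_mul_I]
      congr 1
      have : (n : ℂ) = m + m := by exact_mod_cast hm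
      field_simp
      rw [this]; ring
    have h4 : (c ^ 2 * ξ) ^ m = -1 := by
      rw [mul_pow, ← pow_mul, show 2 * m = n by omega, h1, h3, one_mul]
    rw [h2, one_pow] at h4
    norm_num at h4
  · rintro ⟨m, hm⟩
    have hk : 2 * (m : ZMod n) = -1 := by
      have : ((2 * m + 1 : ℕ) : ZMod n) = 0 := by rw [← hm]; simp
      push_cast at this
      linear_combination this
    have hne : ∀ i : ZMod n, (ZMod.stdAddChar i : ℂ) ≠ 0 := fun i => by
      rw [ZMod.stdAddChar_apply]; exact Circle.coe_ne_zero _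
    refine ⟨(dihHom n m).toHomUnits, ?_, ⟨ZMod.stdAddChar (m : ZMod n), hne _, ?_⟩,
      ⟨1, one_ne_zero, ?_⟩⟩
    · intro a b h
      exact dihHom_injective n m hk (congrArg Units.val h)
    · have hx : Complex.exp (2 * Real.pi * Complex.I / n) = ZMod.stdAddChar (1 : ZMod n) := by
        have := ZMod.stdAddChar_coe (N := n) 1
        simpa using this.symm
      rw [MonoidHom.coe_toHomUnits, hx]
      have e : (ZMod.stdAddChar (-(m : ZMod n)) : ℂ) =
          ZMod.stdAddChar (m : ZMod n) * ZMod.stdAddChar (1 : ZMod n) := by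
        rw [← AddChar.map_add_eq_mul]
        congr 1
        linear_combination -hk
      ext i j
      fin_cases i <;> fin_cases j <;> simp [dihHom, dihMat, e]
    · rw [MonoidHom.coe_toHomUnits]
      simp [dihHom, dihMat]
end

section
/- Let K be a finite subgroup of PGL(2, ℂ) and let β be a nonzero homogeneous polynomial of degree 6 in two variables x₀, x₁ over ℂ such that for every g ∈ GL(2, ℂ) with π(g) ∈ K, the polynomial β∘g is a nonzero scalar multiple of β. Then there exists a unique subgroup G of GL(2, ℂ) such that: (i) π(G) = K and the kernel of the restriction of π to G is exactly {Id, −Id}, and (ii) β∘g = (det g)²·β for every g ∈ G. (Proposition: existence and uniqueness of the extendable group acting on ℂ[x₀, x₁, z]/(z² − β) determined by the pair (K, β).) -/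
/-- `PGL(2, ℂ)`: the quotient of `GL(2, ℂ)` by its center (the nonzero scalar matrices). -/
abbrev PGL2C := GL (Fin 2) ℂ ⧸ Subgroup.center (GL (Fin 2) ℂ)

/-- The canonical projection `π : GL(2, ℂ) → PGL(2, ℂ)`. -/
def projGL2 : GL (Fin 2) ℂ →* PGL2C := QuotientGroup.mk' (Subgroup.center (GL (Fin 2) ℂ))

/-- `β ∘ g`: the polynomial obtained from `β` by substituting
`(g₀₀x₀ + g₀₁x₁, g₁₀x₀ + g₁₁x₁)` for `(x₀, x₁)`. -/
noncomputable def polyComp (g : GL (Fin 2) ℂ) (β : MvPolynomial (Fin 2) ℂ) :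
    MvPolynomial (Fin 2) ℂ :=
  MvPolynomial.aeval
    (fun i => ∑ j, MvPolynomial.C ((g : Matrix (Fin 2) (Fin 2) ℂ) i j) * MvPolynomial.X j) β

open Matrix.GeneralLinearGroup in
lemma polyComp_scalar_aux (u : ℂˣ) (β : MvPolynomial (Fin 2) ℂ) (hβh : β.IsHomogeneous 6) :
    polyComp (scalar (Fin 2) u) β = (u : ℂ) ^ 6 • β := by
  have h1 : (fun i => ∑ j, MvPolynomial.C
      ((scalar (Fin 2) u : Matrix (Fin 2) (Fin 2) ℂ) i j) *
        (MvPolynomial.X j : MvPolynomial (Fin 2) ℂ)) =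
      fun i => MvPolynomial.C (u : ℂ) * MvPolynomial.X i := by
    funext i
    fin_cases i <;> simp [Fin.sum_univ_two]
  unfold polyComp
  rw [h1]
  conv_lhs => rw [β.as_sum]
  conv_rhs => rw [β.as_sum]
  rw [map_sum, Finset.smul_sum]
  refine Finset.sum_congr rfl fun d hd => ?_
  have hdeg : d 0 + d 1 = 6 := by
    have := hβh (MvPolynomial.mem_support_iff.mp hd)
    rw [Finsupp.weight_apply, Finsupp.sum_fintype _ _ (by simp)] at this
    simpa [Fin.sum_univ_two] using this
  rw [MvPolynomial.aeval_monomial, MvPolynomial.monomial_eq,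
    Finsupp.prod_fintype _ _ (by simp), Finsupp.prod_fintype _ _ (by simp), ← hdeg]
  simp only [Fin.prod_univ_two, MvPolynomial.algebraMap_eq, MvPolynomial.smul_eq_C_mul, map_pow]
  ring

lemma polyComp_mul_aux (g h : GL (Fin 2) ℂ) (β : MvPolynomial (Fin 2) ℂ) :
    polyComp (g * h) β = polyComp h (polyComp g β) := by
  unfold polyComp
  rw [← AlgHom.comp_apply]
  refine DFunLike.congr_fun ?_ β
  apply MvPolynomial.algHom_ext
  intro i
  simp [Fin.sum_univ_two, Matrix.mul_apply, MvPolynomial.algHom_C, MvPolynomial.algebraMap_eq]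
  ring

lemma polyComp_one_aux (β : MvPolynomial (Fin 2) ℂ) : polyComp 1 β = β := by
  have h1 : (fun i => ∑ j, MvPolynomial.C
      (((1 : GL (Fin 2) ℂ) : Matrix (Fin 2) (Fin 2) ℂ) i j) *
        (MvPolynomial.X j : MvPolynomial (Fin 2) ℂ)) = MvPolynomial.X := by
    funext i
    fin_cases i <;> simp [Fin.sum_univ_two]
  unfold polyComp
  rw [h1]
  simp

lemma polyComp_smul_aux (g : GL (Fin 2) ℂ) (c : ℂ) (β : MvPolynomial (Fin 2) ℂ) :
    polyComp g (c • β) = c • polyComp g β := by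
  unfold polyComp
  rw [map_smul]

lemma det_ne_zero_aux (g : GL (Fin 2) ℂ) : (g : Matrix (Fin 2) (Fin 2) ℂ).det ≠ 0 :=
  (Matrix.GeneralLinearGroup.det g).ne_zero

lemma projGL2_eq_one_aux (g : GL (Fin 2) ℂ) :
    projGL2 g = 1 ↔ ∃ u : ℂˣ, Matrix.GeneralLinearGroup.scalar (Fin 2) u = g := by
  unfold projGL2
  rw [← MonoidHom.mem_ker, QuotientGroup.ker_mk',
    Matrix.GeneralLinearGroup.center_eq_range_scalar, MonoidHom.mem_range]

lemma det_scalar_aux (u : ℂˣ) :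
    (Matrix.GeneralLinearGroup.scalar (Fin 2) u : Matrix (Fin 2) (Fin 2) ℂ).det = (u : ℂ) ^ 2 := by
  simp

lemma scalar_neg_one_aux : Matrix.GeneralLinearGroup.scalar (Fin 2) (-1 : ℂˣ) = -1 := by
  ext i j
  fin_cases i <;> fin_cases j <;> simp

/-- The extendable group. -/
noncomputable def extGroupAux (K : Subgroup PGL2C) (β : MvPolynomial (Fin 2) ℂ) :
    Subgroup (GL (Fin 2) ℂ) where
  carrier := {g | projGL2 g ∈ K ∧
    polyComp g β = ((g : Matrix (Fin 2) (Fin 2) ℂ).det) ^ 2 • β}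
  one_mem' := by
    refine ⟨by rw [map_one]; exact K.one_mem, ?_⟩
    rw [polyComp_one_aux]; simp
  mul_mem' := by
    rintro a b ⟨ha, ha'⟩ ⟨hb, hb'⟩
    refine ⟨by rw [map_mul]; exact K.mul_mem ha hb, ?_⟩
    rw [polyComp_mul_aux, ha', polyComp_smul_aux, hb', smul_smul, Units.val_mul, Matrix.det_mul,
      mul_pow]
  inv_mem' := by
    rintro a ⟨ha, ha'⟩
    refine ⟨by rw [map_inv]; exact K.inv_mem ha, ?_⟩
    have h1 : polyComp (a * a⁻¹) β = β := by rw [mul_inv_cancel, polyComp_one_aux]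
    rw [polyComp_mul_aux, ha', polyComp_smul_aux] at h1
    have h2 : (a : Matrix (Fin 2) (Fin 2) ℂ).det *
        ((a⁻¹ : GL (Fin 2) ℂ) : Matrix (Fin 2) (Fin 2) ℂ).det = 1 := by
      rw [← Matrix.det_mul, ← Units.val_mul, mul_inv_cancel]; simp
    conv_rhs => rw [← h1]
    rw [smul_smul, ← mul_pow, mul_comm, h2, one_pow, one_smul]

/-- Let `K` be a finite subgroup of `PGL(2, ℂ)` and `β` a nonzero homogeneous degree 6
polynomial in `x₀, x₁` whose zero divisor is `K`-invariant.  Then there is a unique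
subgroup `G` of `GL(2, ℂ)` with `π(G) = K`, kernel of `π` restricted to `G` exactly
`{Id, −Id}`, and `β ∘ g = (det g)² · β` for all `g ∈ G`. -/
theorem extendable_group_exists_unique (K : Subgroup PGL2C) (hKfin : Finite K)
    (β : MvPolynomial (Fin 2) ℂ) (hβ0 : β ≠ 0) (hβh : β.IsHomogeneous 6)
    (hinv : ∀ g : GL (Fin 2) ℂ, projGL2 g ∈ K →
      ∃ c : ℂ, c ≠ 0 ∧ polyComp g β = c • β) :
    ∃! G : Subgroup (GL (Fin 2) ℂ),
      Subgroup.map projGL2 G = K ∧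
      ((-1 : GL (Fin 2) ℂ) ∈ G ∧ ∀ g ∈ G, projGL2 g = 1 → g = 1 ∨ g = -1) ∧
      (∀ g ∈ G, polyComp g β = ((g : Matrix (Fin 2) (Fin 2) ℂ).det) ^ 2 • β) := by
  have hker : ∀ g ∈ extGroupAux K β, projGL2 g = 1 → g = 1 ∨ g = -1 := by
    rintro g ⟨-, hg⟩ hg1
    obtain ⟨u, rfl⟩ := (projGL2_eq_one_aux g).1 hg1
    rw [polyComp_scalar_aux _ _ hβh, det_scalar_aux] at hg
    have h6 := smul_left_injective ℂ hβ0 hg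
    have hu : (u : ℂ) ^ 2 = 1 := by
      have h4 : (u : ℂ) ^ 4 ≠ 0 := pow_ne_zero 4 u.ne_zero
      apply mul_left_cancel₀ h4
      linear_combination h6
    rcases eq_or_eq_neg_of_sq_eq_sq (u : ℂ) 1 (by rw [hu, one_pow]) with h | h
    · left
      rw [show u = 1 from Units.ext h, map_one]
    · right
      rw [show u = -1 from Units.ext (by simpa using h), scalar_neg_one_aux]
  refine ⟨extGroupAux K β, ⟨?_, ⟨?_, ?_⟩, fun g hg => hg.2⟩, ?_⟩
  · ext k
    constructor
    · rintro ⟨g, hg, rfl⟩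
      exact hg.1
    · intro hk
      obtain ⟨g, rfl⟩ : ∃ g, projGL2 g = k := QuotientGroup.mk'_surjective _ k
      obtain ⟨c, hc, hgc⟩ := hinv g hk
      obtain ⟨l, hl⟩ := IsAlgClosed.exists_pow_nat_eq
        ((g : Matrix (Fin 2) (Fin 2) ℂ).det ^ 2 / c) (n := 2) (by norm_num)
      have hd := det_ne_zero_aux g
      have hl0 : l ≠ 0 := by
        rintro rfl
        have : (g : Matrix (Fin 2) (Fin 2) ℂ).det ^ 2 / c ≠ 0 := div_ne_zero (pow_ne_zero 2 hd) hc
        apply this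
        rw [← hl]; simp
      have hproj : projGL2 (Matrix.GeneralLinearGroup.scalar (Fin 2) (Units.mk0 l hl0)) = 1 :=
        (projGL2_eq_one_aux _).2 ⟨_, rfl⟩
      have hpg : projGL2 (g * Matrix.GeneralLinearGroup.scalar (Fin 2) (Units.mk0 l hl0)) =
          projGL2 g := by rw [map_mul, hproj, mul_one]
      refine ⟨g * Matrix.GeneralLinearGroup.scalar (Fin 2) (Units.mk0 l hl0), ⟨?_, ?_⟩, hpg⟩
      · rw [hpg]; exact hk
      · rw [polyComp_mul_aux, hgc, polyComp_smul_aux, polyComp_scalar_aux _ _ hβh, smul_smul,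
          Units.val_mul, Matrix.det_mul, det_scalar_aux, Units.val_mk0]
        congr 1
        have h2 : l ^ 2 * c = (g : Matrix (Fin 2) (Fin 2) ℂ).det ^ 2 := by
          rw [hl]; field_simp
        rw [mul_pow, ← h2]
        ring
  · rw [← scalar_neg_one_aux]
    refine ⟨?_, ?_⟩
    · rw [(projGL2_eq_one_aux _).2 ⟨_, rfl⟩]; exact K.one_mem
    · rw [polyComp_scalar_aux _ _ hβh, det_scalar_aux]; norm_num
  · exact hker
  · rintro G ⟨hG1, ⟨hG2, hG3⟩, hG4⟩
    have hle : G ≤ extGroupAux K β := fun g hg =>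
      ⟨by rw [← hG1]; exact ⟨g, hg, rfl⟩, hG4 g hg⟩
    refine le_antisymm hle ?_
    intro g hg
    have hk : projGL2 g ∈ Subgroup.map projGL2 G := by rw [hG1]; exact hg.1
    obtain ⟨g', hg', he⟩ := hk
    have hz : g'⁻¹ * g ∈ extGroupAux K β :=
      (extGroupAux K β).mul_mem ((extGroupAux K β).inv_mem (hle hg')) hg
    have hz1 : projGL2 (g'⁻¹ * g) = 1 := by rw [map_mul, map_inv, he, inv_mul_cancel]
    have hzG : g'⁻¹ * g ∈ G := by
      rcases hker (g'⁻¹ * g) hz hz1 with h | h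
      · rw [h]; exact G.one_mem
      · rw [h]; exact hG2
    have := G.mul_mem hg' hzG
    rwa [mul_inv_cancel_left] at this
end

section
/- Let K be a finite subgroup of PGL(2, ℂ), let β be a nonzero homogeneous polynomial of degree 6 in x₀, x₁ over ℂ whose zero divisor is K-invariant (i.e., for every g ∈ GL(2, ℂ) with π(g) ∈ K, β∘g is a nonzero scalar multiple of β), and let G be a subgroup of GL(2, ℂ) with π(G) = K, kernel of π restricted to G equal to {Id, −Id}, and β∘g = (det g)²·β for all g ∈ G. Then G contains a subgroup H such that π restricted to H is an isomorphism onto K if and only if there exist (i) a group homomorphism ε : K → GL(2, ℂ) with π∘ε equal to the inclusion of K into PGL(2, ℂ), and (ii) a group homomorphism ν : K → ℂ* such that β∘ε(k) = ν(k)²·β for every k ∈ K. (Proposition: the pair (K, β) yields a splitted extendable group G if and only if there is a lifting ε of K and a square root ν of the character μ associated to ε and β.) -/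
open Matrix in
lemma polyComp_scalar_mul (u : ℂˣ) (g : GL (Fin 2) ℂ) (β : MvPolynomial (Fin 2) ℂ)
    (hβh : β.IsHomogeneous 6) :
    polyComp (GeneralLinearGroup.scalar (Fin 2) u * g) β = (u : ℂ) ^ 6 • polyComp g β := by
  have hf : ∀ i, (∑ j, MvPolynomial.C
      (((GeneralLinearGroup.scalar (Fin 2) u * g : GL (Fin 2) ℂ) :
        Matrix (Fin 2) (Fin 2) ℂ) i j) * MvPolynomial.X j : MvPolynomial (Fin 2) ℂ)
      = MvPolynomial.C (u : ℂ) * ∑ j, MvPolynomial.C ((g : Matrix (Fin 2) (Fin 2) ℂ) i j) *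
        MvPolynomial.X j := by
    intro i
    rw [Finset.mul_sum]
    refine Finset.sum_congr rfl fun j _ => ?_
    rw [Units.val_mul, GeneralLinearGroup.coe_scalar, Matrix.scalar_apply,
      Matrix.diagonal_mul, MvPolynomial.C_mul, mul_assoc]
  unfold polyComp
  simp only [hf]
  rw [MvPolynomial.aeval_def, MvPolynomial.aeval_def, MvPolynomial.eval₂_eq',
    MvPolynomial.eval₂_eq', MvPolynomial.smul_eq_C_mul, Finset.mul_sum]
  refine Finset.sum_congr rfl fun d hd => ?_
  have hdeg : d 0 + d 1 = 6 := by
    have : 6 = d.degree := hβh.degree_eq_sum_deg_support hd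
    rw [Finsupp.degree_eq_sum] at this
    simpa [Fin.sum_univ_two] using this.symm
  simp only [Fin.prod_univ_two, mul_pow, map_pow]
  rw [← hdeg, pow_add]
  ring

lemma projGL2_scalar (u : ℂˣ) :
    projGL2 (Matrix.GeneralLinearGroup.scalar (Fin 2) u) = 1 := by
  refine (QuotientGroup.eq_one_iff _).2 ?_
  rw [Matrix.GeneralLinearGroup.center_eq_range_scalar]
  exact ⟨u, rfl⟩

lemma exists_scalar_of_projGL2_eq {g h : GL (Fin 2) ℂ} (e : projGL2 g = projGL2 h) :
    ∃ u : ℂˣ, g = Matrix.GeneralLinearGroup.scalar (Fin 2) u * h := by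
  have h1 : projGL2 (g * h⁻¹) = 1 := by rw [map_mul, map_inv, e, mul_inv_cancel]
  have h2 := (QuotientGroup.eq_one_iff _).1 h1
  rw [Matrix.GeneralLinearGroup.center_eq_range_scalar] at h2
  obtain ⟨u, hu⟩ := h2
  exact ⟨u, by rw [hu, inv_mul_cancel_right]⟩

/-- For `K` a finite subgroup of `PGL(2, ℂ)`, `β` a nonzero homogeneous sextic with
`K`-invariant zero divisor, and `G` the associated extendable group, `G` contains a
subgroup `H` mapping isomorphically onto `K` if and only if there is a lifting
`ε : K → GL(2, ℂ)` of the inclusion and a character `ν : K → ℂ*` with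
`β ∘ ε(k) = ν(k)² · β` for all `k ∈ K`. -/
theorem splitting_iff_lifting_and_sqrt (K : Subgroup PGL2C) (hKfin : Finite K)
    (β : MvPolynomial (Fin 2) ℂ) (hβ0 : β ≠ 0) (hβh : β.IsHomogeneous 6)
    (hinv : ∀ g : GL (Fin 2) ℂ, projGL2 g ∈ K →
      ∃ c : ℂ, c ≠ 0 ∧ polyComp g β = c • β)
    (G : Subgroup (GL (Fin 2) ℂ))
    (hmap : Subgroup.map projGL2 G = K)
    (hneg : (-1 : GL (Fin 2) ℂ) ∈ G)
    (hker : ∀ g ∈ G, projGL2 g = 1 → g = 1 ∨ g = -1)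
    (hdet : ∀ g ∈ G, polyComp g β = ((g : Matrix (Fin 2) (Fin 2) ℂ).det) ^ 2 • β) :
    (∃ H : Subgroup (GL (Fin 2) ℂ), H ≤ G ∧ Subgroup.map projGL2 H = K ∧
        ∀ h ∈ H, projGL2 h = 1 → h = 1) ↔
    (∃ ε : K →* GL (Fin 2) ℂ, (∀ k : K, projGL2 (ε k) = (k : PGL2C)) ∧
        ∃ ν : K →* ℂˣ, ∀ k : K,
          polyComp (ε k) β = ((ν k : ℂ)) ^ 2 • β) := by
  constructor
  · rintro ⟨H, hHG, hHK, hH1⟩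
    let f : H →* K := (projGL2.comp H.subtype).codRestrict K
      (fun h => hHK ▸ Subgroup.mem_map_of_mem projGL2 h.2)
    have hfv : ∀ h : H, ((f h : K) : PGL2C) = projGL2 h := fun _ => rfl
    have hf : Function.Bijective f := by
      constructor
      · rw [injective_iff_map_eq_one]
        intro h hh
        apply Subtype.ext
        apply hH1 h h.2
        rw [← hfv, hh]
        rfl
      · rintro ⟨k, hk⟩
        have hk2 := hk
        rw [← hHK] at hk2
        obtain ⟨h, hh, rfl⟩ := hk2
        exact ⟨⟨h, hh⟩, rfl⟩
    let e : H ≃* K := MulEquiv.ofBijective f hf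
    refine ⟨H.subtype.comp e.symm.toMonoidHom, ?_,
      Matrix.GeneralLinearGroup.det.comp (H.subtype.comp e.symm.toMonoidHom), ?_⟩
    · intro k
      exact congrArg Subtype.val (e.apply_symm_apply k)
    · intro k
      exact hdet _ (hHG (e.symm k).2)
  · rintro ⟨ε, hε, ν, hν⟩
    let c : K →* ℂˣ := (Matrix.GeneralLinearGroup.det.comp ε) / ν
    let φ : K →* GL (Fin 2) ℂ :=
      { toFun := fun k => Matrix.GeneralLinearGroup.scalar (Fin 2) (c k) * ε k
        map_one' := by simp
        map_mul' := fun a b => by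
          rw [map_mul, map_mul, map_mul, mul_assoc, mul_assoc,
            ← mul_assoc _ (ε a) (ε b), Matrix.GeneralLinearGroup.scalar_commute (c b) (ε a),
            mul_assoc] }
    have hφv : ∀ k, φ k = Matrix.GeneralLinearGroup.scalar (Fin 2) (c k) * ε k := fun _ => rfl
    have hφ : ∀ k, projGL2 (φ k) = k := by
      intro k
      rw [hφv, map_mul, projGL2_scalar, one_mul, hε]
    have hφG : ∀ k, φ k ∈ G := by
      intro k
      have hk : (k : PGL2C) ∈ Subgroup.map projGL2 G := hmap.symm ▸ k.2
      obtain ⟨g, hg, hgk⟩ := hk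
      obtain ⟨u, hu⟩ := exists_scalar_of_projGL2_eq (hgk.trans (hε k).symm)
      have h1 := hdet g hg
      have hd : (g : Matrix (Fin 2) (Fin 2) ℂ).det
          = (u : ℂ) ^ 2 * (ε k : Matrix (Fin 2) (Fin 2) ℂ).det := by
        rw [hu, Units.val_mul, Matrix.det_mul, Matrix.GeneralLinearGroup.coe_scalar]
        simp
      rw [hd, hu, polyComp_scalar_mul u _ β hβh, hν, smul_smul] at h1
      have h2 := smul_left_injective ℂ hβ0 h1
      have hu0 : (u : ℂ) ≠ 0 := u.ne_zero
      have hν0 : (ν k : ℂ) ≠ 0 := (ν k).ne_zero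
      have h3 : ((u : ℂ) * ν k) ^ 2 = ((ε k : Matrix (Fin 2) (Fin 2) ℂ).det) ^ 2 := by
        apply mul_left_cancel₀ (pow_ne_zero 4 hu0)
        linear_combination h2
      have hc : (c k : ℂ) * ν k = (ε k : Matrix (Fin 2) (Fin 2) ℂ).det := by
        have : c k * ν k = Matrix.GeneralLinearGroup.det (ε k) := by
          simp [c]
        exact congrArg Units.val this
      rw [← hc] at h3
      rcases sq_eq_sq_iff_eq_or_eq_neg.1 h3 with h4 | h4
      · have : u = c k := Units.ext (mul_right_cancel₀ hν0 h4)
        rw [hφv, ← this, ← hu]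
        exact hg
      · have : u = - c k := Units.ext (mul_right_cancel₀ hν0 (by
          rw [h4]; simp))
        have h5 : φ k = -1 * g := by
          rw [hφv, hu, this]
          apply Units.ext
          ext i j
          simp [Matrix.GeneralLinearGroup.coe_scalar, Matrix.diagonal_mul]
        rw [h5]
        exact G.mul_mem hneg hg
    refine ⟨φ.range, ?_, ?_, ?_⟩
    · rintro _ ⟨k, rfl⟩
      exact hφG k
    · ext x
      constructor
      · rintro ⟨_, ⟨k, rfl⟩, rfl⟩
        rw [hφ]
        exact k.2
      · intro hx
        exact ⟨φ ⟨x, hx⟩, ⟨_, rfl⟩, hφ ⟨x, hx⟩⟩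
    · rintro _ ⟨k, rfl⟩ h
      rw [hφ] at h
      have : k = 1 := Subtype.ext h
      rw [this, map_one]
end

section
/- Let T = ((i−1)i/2)·[[1, 1],[i, −i]] and U = (1/√2)·[[i−1, 0],[0, i+1]] in GL(2, ℂ), and let H be the subgroup of GL(2, ℂ) generated by T and U. Then: U has order 8 and U⁴ = −Id; H has order 48; and there is a surjective group homomorphism from H onto the symmetric group on 4 letters whose kernel is exactly {Id, −Id} (that is, the image of H in PGL(2, ℂ) is isomorphic to S₄). In particular, H is not isomorphic to S₄ × ℤ/2, since H contains an element of order 8. (This is the second step of the proof classifying extendable groups: the extendable group associated to the octahedral group K = S₄ is H = ⟨T, U⟩.) -/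
/-- Entries of `T` and `U` in terms of a primitive eighth root of unity `z`. -/
lemma oct_setup (T U : GL (Fin 2) ℂ)
    (hT : (T : Matrix (Fin 2) (Fin 2) ℂ) =
      ((Complex.I - 1) * Complex.I / 2) • !![1, 1; Complex.I, -Complex.I])
    (hU : (U : Matrix (Fin 2) (Fin 2) ℂ) =
      (((Real.sqrt 2 : ℝ) : ℂ))⁻¹ • !![Complex.I - 1, 0; 0, Complex.I + 1]) :
    ∃ z s : ℂ, z ^ 4 = -1 ∧ 2 * s = -1 - z ^ 2 ∧
      (T : Matrix (Fin 2) (Fin 2) ℂ) = !![s, s; s * z ^ 2, - (s * z ^ 2)] ∧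
      (U : Matrix (Fin 2) (Fin 2) ℂ) = !![z ^ 3, 0; 0, z] := by
  have hr : (((Real.sqrt 2 : ℝ) : ℂ))⁻¹ ^ 2 = 1 / 2 := by
    rw [inv_pow, ← Complex.ofReal_pow, Real.sq_sqrt (by norm_num)]; norm_num
  have hI : Complex.I ^ 2 = -1 := Complex.I_sq
  rw [hT, hU]
  generalize (((Real.sqrt 2 : ℝ) : ℂ))⁻¹ = r at *
  generalize Complex.I = w at *
  have hz : (r * (w + 1)) ^ 2 = w := by linear_combination (w+1)^2 * hr + hI / 2
  refine ⟨r * (w + 1), (w - 1) * w / 2, ?_, ?_, ?_, ?_⟩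
  · linear_combination ((r * (w + 1)) ^ 2 + w) * hz + hI
  · rw [hz]; linear_combination hI
  · rw [hz]; ext i j; fin_cases i <;> fin_cases j <;> simp
  · have : (r * (w + 1)) ^ 3 = r * (w - 1) := by
      linear_combination (r * (w + 1)) * hz + r * hI
    rw [this]; ext i j; fin_cases i <;> fin_cases j <;> simp

section
variable {T U : GL (Fin 2) ℂ} {z s : ℂ}

/-- All the relations between `T` and `U` that are needed. -/
lemma oct_rel (hz : z ^ 4 = -1) (hs : 2 * s = -1 - z ^ 2)
    (hT : (T : Matrix (Fin 2) (Fin 2) ℂ) = !![s, s; s * z ^ 2, - (s * z ^ 2)])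
    (hU : (U : Matrix (Fin 2) (Fin 2) ℂ) = !![z ^ 3, 0; 0, z]) :
    U ^ 4 = -1 ∧ T ^ 3 = 1 ∧ U * T * U = T ^ 2 ∧
    T ^ 2 * U * U = U ^ 5 * (T ^ 2 * U * T) ∧
    T ^ 2 * U * T ^ 2 * U = U ^ 3 * (T ^ 2 * U * T ^ 2) ∧
    T * (U * T * U ^ 7) = (U ^ 3 * T * U ^ 5) * T ∧
    T * (U ^ 2 * T * U ^ 6) = (U * T ^ 2 * U ^ 7) * T ∧
    T * (U ^ 3 * T * U ^ 5) = (U ^ 2 * T ^ 2 * U ^ 6) * T ∧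
    T * (U * T * U ^ 7) ≠ (U * T * U ^ 7) * T ∧
    T * (U ^ 2 * T * U ^ 6) ≠ (U ^ 2 * T * U ^ 6) * T ∧
    T * (U ^ 3 * T * U ^ 5) ≠ (U ^ 3 * T * U ^ 5) * T := by
  have hs' : s = (-1 - z ^ 2) / 2 := by linear_combination hs / 2
  have hT2 : ((T ^ 2 : GL (Fin 2) ℂ) : Matrix (Fin 2) (Fin 2) ℂ)
      = !![(z ^ 2 - 1) / 2, (z ^ 2 + 1) / 2; (z ^ 2 - 1) / 2, - (z ^ 2 + 1) / 2] := by
    rw [Units.val_pow_eq_pow_val, hT, pow_two, Matrix.mul_fin_two, hs']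
    ext i j; fin_cases i <;> fin_cases j <;> simp <;> grind
  have hU4 : U ^ 4 = -1 := by
    apply Units.ext
    rw [Units.val_pow_eq_pow_val, hU]
    ext i j; fin_cases i <;> fin_cases j <;>
      simp [pow_succ, Matrix.mul_fin_two] <;> grind
  have h5 : U ^ 5 = - U := by rw [pow_succ, hU4]; simp
  have h6 : U ^ 6 = - U ^ 2 := by rw [show 6 = 4 + 2 from rfl, pow_add, hU4]; simp
  have h7 : U ^ 7 = - U ^ 3 := by rw [show 7 = 4 + 3 from rfl, pow_add, hU4]; simp
  have hU2 : ((U ^ 2 : GL (Fin 2) ℂ) : Matrix (Fin 2) (Fin 2) ℂ)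
      = !![- z ^ 2, 0; 0, z ^ 2] := by
    rw [Units.val_pow_eq_pow_val, hU, pow_two, Matrix.mul_fin_two]
    ext i j; fin_cases i <;> fin_cases j <;> simp <;> grind
  have hU3 : ((U ^ 3 : GL (Fin 2) ℂ) : Matrix (Fin 2) (Fin 2) ℂ)
      = !![z, 0; 0, z ^ 3] := by
    rw [pow_succ, Units.val_mul, hU2, hU, Matrix.mul_fin_two]
    ext i j; fin_cases i <;> fin_cases j <;> simp <;> grind
  rw [h5, h6, h7]
  rw [hs'] at hT
  refine ⟨hU4, ?_, ?_, ?_, ?_, ?_, ?_, ?_, ?_, ?_, ?_⟩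
  rotate_left 7
  · intro h
    have h := congrFun (congrFun (congrArg (fun g : GL (Fin 2) ℂ => (g : Matrix (Fin 2) (Fin 2) ℂ)) h) 0) 0
    simp only [Units.val_mul, Units.val_neg, hU2, hU3] at h
    simp [hT, hU, Matrix.mul_fin_two] at h
    grind
  · intro h
    have h := congrFun (congrFun (congrArg (fun g : GL (Fin 2) ℂ => (g : Matrix (Fin 2) (Fin 2) ℂ)) h) 0) 1
    simp only [Units.val_mul, Units.val_neg, hU2, hU3] at h
    simp [hT, hU, Matrix.mul_fin_two] at h
    grind
  · intro h
    have h := congrFun (congrFun (congrArg (fun g : GL (Fin 2) ℂ => (g : Matrix (Fin 2) (Fin 2) ℂ)) h) 0) 0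
    simp only [Units.val_mul, Units.val_neg, hU2, hU3] at h
    simp [hT, hU, Matrix.mul_fin_two] at h
    grind
  all_goals apply Units.ext
  · rw [pow_succ, Units.val_mul, hT2, hT, Matrix.mul_fin_two]
    ext i j; fin_cases i <;> fin_cases j <;> simp <;> grind
  all_goals
    simp only [Units.val_mul, Units.val_neg, hT2, hU2, hU3]
    simp only [hT, hU, Matrix.mul_fin_two, neg_mul, mul_neg]
    ext i j; fin_cases i <;> fin_cases j <;> simp <;> grind


end

section
variable {G : Type*} [Group G]

/-- Conjugates of `T` by powers of `U`. -/
def octC (T U : G) (k : ℕ) : G := MulAut.conj (U ^ k) T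

/-- `h` acts on the four cyclic subgroups generated by `octC T U k` through `σ`. -/
def octR (T U : G) (h : G) (σ : Equiv.Perm (Fin 4)) : Prop :=
  ∀ k : Fin 4, (Subgroup.zpowers (octC T U k)).map (MulAut.conj h).toMonoidHom
    = Subgroup.zpowers (octC T U (σ k))

/-- The permutation induced by `T`. -/
def octS : Equiv.Perm (Fin 4) := ⟨![0, 3, 1, 2], ![0, 2, 3, 1], by decide, by decide⟩

/-- The permutation induced by `U`. -/
def octV : Equiv.Perm (Fin 4) := ⟨![1, 2, 3, 0], ![3, 0, 1, 2], by decide, by decide⟩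

lemma octR_one (T U : G) : octR T U 1 1 := by
  intro k
  rw [map_one]
  exact Subgroup.map_id _

lemma octR_mul {T U h h' : G} {σ σ' : Equiv.Perm (Fin 4)} (H : octR T U h σ)
    (H' : octR T U h' σ') : octR T U (h * h') (σ * σ') := by
  intro k
  rw [Equiv.Perm.mul_apply, ← H, ← H', Subgroup.map_map, map_mul]
  rfl

lemma octR_inv {T U h : G} {σ : Equiv.Perm (Fin 4)} (H : octR T U h σ) :
    octR T U h⁻¹ σ⁻¹ := by
  intro k
  have := H (σ⁻¹ k)
  rw [show σ (σ⁻¹ k) = k from σ.apply_symm_apply k] at this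
  rw [← this, Subgroup.map_map]
  convert Subgroup.map_id _
  ext x; simp [mul_assoc]

lemma oct_generate : ∀ σ : Equiv.Perm (Fin 4), ∃ (a : Fin 4) (b : Fin 3) (c : Fin 2) (d : Fin 3),
    σ = octV ^ (a : ℕ) * octS ^ (b : ℕ) * octV ^ (c : ℕ) * octS ^ (d : ℕ) := by
  decide +kernel

lemma octC_succ (T U : G) (k : ℕ) : MulAut.conj U (octC T U k) = octC T U (k + 1) := by
  simp only [octC, MulAut.conj_apply, pow_succ']; group

/-- Coset representatives. -/
def octW (T U : G) : Fin 6 → G := ![1, T, T ^ 2, T ^ 2 * U, T ^ 2 * U * T, T ^ 2 * U * T ^ 2]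

lemma oct_cover {T U : G} (h8 : U ^ 8 = 1) (h3 : T ^ 3 = 1) (r1 : U * T * U = T ^ 2)
    (r2 : T ^ 2 * U * U = U ^ 5 * (T ^ 2 * U * T))
    (r3 : T ^ 2 * U * T ^ 2 * U = U ^ 3 * (T ^ 2 * U * T ^ 2)) (h : G)
    (hh : h ∈ Subgroup.closure {T, U}) : ∃ (a : ℕ) (j : Fin 6), h = U ^ a * octW T U j := by
  have h3' : T ^ 2 * T = 1 := by rw [← pow_succ, h3]
  have hTT : T * T = T ^ 2 := (pow_two T).symm
  have key : ∀ j : Fin 6, (∃ (a : ℕ) (i : Fin 6), octW T U j * T = U ^ a * octW T U i) ∧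
      (∃ (a : ℕ) (i : Fin 6), octW T U j * U = U ^ a * octW T U i) := by
    intro j
    fin_cases j
    · exact ⟨⟨0, 1, by simp [octW]⟩, ⟨1, 0, by simp [octW]⟩⟩
    · refine ⟨⟨0, 2, by simp [octW, pow_two]⟩, ⟨7, 2, ?_⟩⟩
      simp only [octW]
      change T * U = U ^ 7 * T ^ 2
      rw [← r1, mul_assoc U, ← mul_assoc, ← pow_succ, h8, one_mul]
    · exact ⟨⟨0, 0, by simpa [octW] using h3'⟩, ⟨0, 3, by simp [octW]⟩⟩
    · exact ⟨⟨0, 4, by simp [octW]⟩, ⟨5, 4, r2⟩⟩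
    · refine ⟨⟨0, 5, by simp [octW, mul_assoc, pow_two]⟩, ⟨0, 1, ?_⟩⟩
      change T ^ 2 * U * T * U = U ^ 0 * T
      rw [mul_assoc (T ^ 2), mul_assoc (T ^ 2), r1, pow_zero, one_mul, pow_two, ← mul_assoc,
        mul_assoc T, hTT, ← pow_succ', h3, one_mul]
    · refine ⟨⟨0, 3, ?_⟩, ⟨3, 5, r3⟩⟩
      change T ^ 2 * U * T ^ 2 * T = U ^ 0 * (T ^ 2 * U)
      rw [mul_assoc, h3', mul_one, pow_zero, one_mul]
  have kT : ∀ x, (∃ (a : ℕ) (j : Fin 6), x = U ^ a * octW T U j) →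
      (∃ (a : ℕ) (j : Fin 6), x * T = U ^ a * octW T U j) := by
    rintro x ⟨a, j, rfl⟩
    obtain ⟨b, i, hb⟩ := (key j).1
    exact ⟨a + b, i, by rw [mul_assoc, hb, pow_add, mul_assoc]⟩
  have kU : ∀ x, (∃ (a : ℕ) (j : Fin 6), x = U ^ a * octW T U j) →
      (∃ (a : ℕ) (j : Fin 6), x * U = U ^ a * octW T U j) := by
    rintro x ⟨a, j, rfl⟩
    obtain ⟨b, i, hb⟩ := (key j).2
    exact ⟨a + b, i, by rw [mul_assoc, hb, pow_add, mul_assoc]⟩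
  have hTi : T⁻¹ = T * T := by rw [hTT]; exact inv_eq_of_mul_eq_one_left h3'
  have hUi : U⁻¹ = U * U * U * U * U * U * U := by
    apply inv_eq_of_mul_eq_one_left
    rw [← h8]; simp only [pow_succ, pow_zero, one_mul]
  induction hh using Subgroup.closure_induction_right with
  | one => exact ⟨0, 0, by simp [octW]⟩
  | mul_right x hx y hy ih =>
    rcases hy with rfl | rfl
    · exact kT _ ih
    · exact kU _ ih
  | mul_inv_cancel x hx y hy ih =>
    rcases hy with rfl | rfl
    · rw [hTi, ← mul_assoc]; exact kT _ (kT _ ih)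
    · rw [hUi]; simp only [← mul_assoc]
      exact kU _ (kU _ (kU _ (kU _ (kU _ (kU _ (kU _ ih))))))

theorem oct_abs {T U : G} (h8 : U ^ 8 = 1) (hne : U ^ 4 ≠ 1) (hc : U ^ 4 * T = T * U ^ 4)
    (h3 : T ^ 3 = 1) (r1 : U * T * U = T ^ 2)
    (r2 : T ^ 2 * U * U = U ^ 5 * (T ^ 2 * U * T))
    (r3 : T ^ 2 * U * T ^ 2 * U = U ^ 3 * (T ^ 2 * U * T ^ 2))
    (c1 : T * (U * T * U ^ 7) = (U ^ 3 * T * U ^ 5) * T)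
    (c2 : T * (U ^ 2 * T * U ^ 6) = (U * T ^ 2 * U ^ 7) * T)
    (c3 : T * (U ^ 3 * T * U ^ 5) = (U ^ 2 * T ^ 2 * U ^ 6) * T)
    (n1 : T * (U * T * U ^ 7) ≠ (U * T * U ^ 7) * T)
    (n2 : T * (U ^ 2 * T * U ^ 6) ≠ (U ^ 2 * T * U ^ 6) * T)
    (n3 : T * (U ^ 3 * T * U ^ 5) ≠ (U ^ 3 * T * U ^ 5) * T) :
    Nat.card (Subgroup.closure {T, U} : Subgroup G) = 48 ∧
    (∃ f : (Subgroup.closure {T, U} : Subgroup G) →* Equiv.Perm (Fin 4),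
      Function.Surjective f ∧
      ∀ h : (Subgroup.closure {T, U} : Subgroup G),
        f h = 1 ↔ ((h : G) = 1 ∨ (h : G) = U ^ 4)) := by
  have u7 : U ^ 7 = (U ^ 1)⁻¹ := by rw [eq_inv_iff_mul_eq_one, ← pow_add, h8]
  have u6 : U ^ 6 = (U ^ 2)⁻¹ := by rw [eq_inv_iff_mul_eq_one, ← pow_add, h8]
  have u5 : U ^ 5 = (U ^ 3)⁻¹ := by rw [eq_inv_iff_mul_eq_one, ← pow_add, h8]
  have hT2 : T ^ 2 = T⁻¹ := by rw [eq_inv_iff_mul_eq_one, ← pow_succ, h3]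
  have e0 : octC T U 0 = T := by simp [octC]
  have e1 : octC T U 1 = U * T * U ^ 7 := by rw [u7]; simp [octC]
  have e2 : octC T U 2 = U ^ 2 * T * U ^ 6 := by rw [u6]; rfl
  have e3 : octC T U 3 = U ^ 3 * T * U ^ 5 := by rw [u5]; rfl
  have e4 : octC T U 4 = octC T U 0 := by
    simp only [octC, MulAut.conj_apply, hc]; simp
  have i1 : U * T ^ 2 * U ^ 7 = (octC T U 1)⁻¹ := by
    rw [hT2, u7]; simp [octC, mul_assoc]
  have i2 : U ^ 2 * T ^ 2 * U ^ 6 = (octC T U 2)⁻¹ := by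
    rw [hT2, u6]; simp only [octC, MulAut.conj_apply, mul_inv_rev, inv_inv, mul_assoc]
  rw [i1] at c2
  rw [i2] at c3
  rw [← e1] at n1 c1
  rw [← e2] at n2 c2
  rw [← e3] at n3 c3 c1
  -- action of the generators
  have RU : octR T U U octV := by
    intro k
    rw [MonoidHom.map_zpowers]
    change Subgroup.zpowers (MulAut.conj U (octC T U k)) = _
    rw [octC_succ]
    fin_cases k
    · rfl
    · rfl
    · rfl
    · exact congrArg _ e4
  have RT : octR T U T octS := by
    intro k
    rw [MonoidHom.map_zpowers]
    change Subgroup.zpowers (T * (octC T U k) * T⁻¹) = _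
    fin_cases k
    · change Subgroup.zpowers (T * (octC T U 0) * T⁻¹) = Subgroup.zpowers (octC T U 0)
      rw [e0]; simp
    · change Subgroup.zpowers (T * (octC T U 1) * T⁻¹) = Subgroup.zpowers (octC T U 3)
      rw [c1]; simp
    · change Subgroup.zpowers (T * (octC T U 2) * T⁻¹) = Subgroup.zpowers (octC T U 1)
      rw [c2]; simp
    · change Subgroup.zpowers (T * (octC T U 3) * T⁻¹) = Subgroup.zpowers (octC T U 2)
      rw [c3]; simp
  -- the four subgroups are distinct
  have nc : ∀ i j : Fin 4, i < j → ¬ Commute (octC T U i) (octC T U j) := by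
    intro i j hij hcm
    obtain ⟨m, hm⟩ : ∃ m, (j : ℕ) = i + m := ⟨j - i, by omega⟩
    have hj : octC T U j = MulAut.conj (U ^ (i : ℕ)) (octC T U m) := by
      rw [hm]; simp only [octC, pow_add, map_mul, MulAut.mul_apply]
    rw [hj] at hcm
    have hcm' : Commute T (octC T U m) := by
      have := hcm.map (MulAut.conj (U ^ (i : ℕ))).symm
      simpa [octC] using this
    have : m = 1 ∨ m = 2 ∨ m = 3 := by omega
    rcases this with rfl | rfl | rfl
    · exact n1 hcm'
    · exact n2 hcm'
    · exact n3 hcm'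
  have inj : ∀ i j : Fin 4, Subgroup.zpowers (octC T U i) = Subgroup.zpowers (octC T U j) →
      i = j := by
    intro i j hij
    have hcm : Commute (octC T U i) (octC T U j) := by
      have : octC T U j ∈ Subgroup.zpowers (octC T U i) := by
        rw [hij]; exact Subgroup.mem_zpowers _
      obtain ⟨n, hn⟩ := this
      rw [← hn]
      exact (Commute.refl _).zpow_right n
    rcases lt_trichotomy i j with h | h | h
    · exact absurd hcm (nc _ _ h)
    · exact h
    · exact absurd hcm.symm (nc _ _ h)
  have uniq : ∀ h σ σ', octR T U h σ → octR T U h σ' → σ = σ' := by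
    intro h σ σ' H H'
    ext1 k
    exact inj _ _ ((H k).symm.trans (H' k))
  have ex : ∀ h : (Subgroup.closure {T, U} : Subgroup G), ∃ σ, octR T U h σ := by
    rintro ⟨h, hh⟩
    change ∃ σ, octR T U h σ
    induction hh using Subgroup.closure_induction with
    | mem x hx =>
      rcases hx with rfl | rfl
      · exact ⟨_, RT⟩
      · exact ⟨_, RU⟩
    | one => exact ⟨_, octR_one T U⟩
    | mul x y _ _ hx hy =>
      obtain ⟨σ, hσ⟩ := hx
      obtain ⟨τ, hτ⟩ := hy
      exact ⟨_, octR_mul hσ hτ⟩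
    | inv x _ hx =>
      obtain ⟨σ, hσ⟩ := hx
      exact ⟨_, octR_inv hσ⟩
  choose g hg using ex
  let f : (Subgroup.closure {T, U} : Subgroup G) →* Equiv.Perm (Fin 4) :=
    MonoidHom.mk' g (fun a b => uniq _ _ _ (hg (a * b)) (octR_mul (hg a) (hg b)))
  have hTm : T ∈ (Subgroup.closure {T, U} : Subgroup G) := Subgroup.subset_closure (by simp)
  have hUm : U ∈ (Subgroup.closure {T, U} : Subgroup G) := Subgroup.subset_closure (by simp)
  have fT : f ⟨T, hTm⟩ = octS := uniq _ _ _ (hg _) RT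
  have fU : f ⟨U, hUm⟩ = octV := uniq _ _ _ (hg _) RU
  have fs : Function.Surjective f := by
    intro σ
    obtain ⟨a, b, c, d, rfl⟩ := oct_generate σ
    refine ⟨⟨U, hUm⟩ ^ (a : ℕ) * ⟨T, hTm⟩ ^ (b : ℕ) * ⟨U, hUm⟩ ^ (c : ℕ) * ⟨T, hTm⟩ ^ (d : ℕ), ?_⟩
    simp only [map_mul, map_pow, fT, fU]
  -- upper bound
  have hsub : ((Subgroup.closure {T, U} : Subgroup G) : Set G) ⊆
      Set.range (fun p : Fin 8 × Fin 6 => U ^ (p.1 : ℕ) * octW T U p.2) := by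
    intro h hh
    obtain ⟨a, j, rfl⟩ := oct_cover h8 h3 r1 r2 r3 h hh
    refine ⟨(⟨a % 8, Nat.mod_lt _ (by norm_num)⟩, j), ?_⟩
    change U ^ (a % 8) * _ = _
    rw [← pow_eq_pow_mod a h8]
  have hfin : ((Subgroup.closure {T, U} : Subgroup G) : Set G).Finite :=
    (Set.finite_range _).subset hsub
  have : Finite (Subgroup.closure {T, U} : Subgroup G) := hfin
  have hle : Nat.card (Subgroup.closure {T, U} : Subgroup G) ≤ 48 := by
    have h1 := Set.ncard_le_ncard hsub (Set.finite_range _)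
    have h2 := Finite.card_range_le (fun p : Fin 8 × Fin 6 => U ^ (p.1 : ℕ) * octW T U p.2)
    rw [Nat.card_eq_fintype_card (α := Fin 8 × Fin 6)] at h2
    simp only [Fintype.card_prod, Fintype.card_fin] at h2
    exact h1.trans h2
  have hcard : Nat.card f.ker * 24 = Nat.card (Subgroup.closure {T, U} : Subgroup G) := by
    rw [← Subgroup.card_mul_index f.ker, Subgroup.index_ker, MonoidHom.range_eq_top.2 fs,
      Subgroup.card_top, Nat.card_perm, Nat.card_fin]
    rfl
  let e : (Subgroup.closure {T, U} : Subgroup G) := ⟨U, hUm⟩ ^ 4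
  have he : (e : G) = U ^ 4 := rfl
  have fe : f e = 1 := by
    change f (⟨U, hUm⟩ ^ 4) = 1
    rw [map_pow, fU]; decide
  have hsub2 : ({1, e} : Set (Subgroup.closure {T, U} : Subgroup G)) ⊆ (f.ker : Set _) := by
    rintro x (rfl | rfl)
    · exact one_mem f.ker
    · exact fe
  have hne' : (1 : (Subgroup.closure {T, U} : Subgroup G)) ≠ e := by
    intro h
    exact hne (by rw [← he, ← h]; rfl)
  have h2 : ({1, e} : Set (Subgroup.closure {T, U} : Subgroup G)).ncard = 2 :=
    Set.ncard_pair hne'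
  have hk : (f.ker : Set (Subgroup.closure {T, U} : Subgroup G)).ncard = Nat.card f.ker := rfl
  have hk2 : 2 ≤ Nat.card f.ker := by
    rw [← hk, ← h2]; exact Set.ncard_le_ncard hsub2 (Set.toFinite _)
  have hk3 : Nat.card f.ker = 2 := by omega
  have heq := Set.eq_of_subset_of_ncard_le hsub2 (by rw [hk, hk3, h2]) (Set.toFinite _)
  refine ⟨by omega, f, fs, fun h => ?_⟩
  have hm : h ∈ (f.ker : Set _) ↔ h = 1 ∨ h = e := by rw [← heq]; rfl
  refine (show f h = 1 ↔ h ∈ (f.ker : Set _) from Iff.rfl).trans (hm.trans ?_)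
  simp only [Subtype.ext_iff]
  rfl
end

/-- Let `T = ((i−1)i/2)·[[1,1],[i,−i]]` and `U = (1/√2)·[[i−1,0],[0,i+1]]` in
`GL(2, ℂ)` and let `H = ⟨T, U⟩`.  Then `U` has order 8, `U⁴ = −Id`, `H` has order 48,
and there is a surjection `H → S₄` with kernel exactly `{Id, −Id}`; in particular
`H` contains an element of order 8 and is not isomorphic to `S₄ × ℤ/2`. -/
theorem octahedral_extendable_group (T U : GL (Fin 2) ℂ)
    (hT : (T : Matrix (Fin 2) (Fin 2) ℂ) =
      ((Complex.I - 1) * Complex.I / 2) • !![1, 1; Complex.I, -Complex.I])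
    (hU : (U : Matrix (Fin 2) (Fin 2) ℂ) =
      (((Real.sqrt 2 : ℝ) : ℂ))⁻¹ • !![Complex.I - 1, 0; 0, Complex.I + 1]) :
    orderOf U = 8 ∧ U ^ 4 = -1 ∧
    Nat.card (Subgroup.closure {T, U} : Subgroup (GL (Fin 2) ℂ)) = 48 ∧
    (∃ f : (Subgroup.closure {T, U} : Subgroup (GL (Fin 2) ℂ)) →* Equiv.Perm (Fin 4),
      Function.Surjective f ∧
      ∀ h : (Subgroup.closure {T, U} : Subgroup (GL (Fin 2) ℂ)),
        f h = 1 ↔ ((h : GL (Fin 2) ℂ) = 1 ∨ (h : GL (Fin 2) ℂ) = -1)) ∧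
    (∃ h : (Subgroup.closure {T, U} : Subgroup (GL (Fin 2) ℂ)), orderOf h = 8) ∧
    ¬ Nonempty ((Subgroup.closure {T, U} : Subgroup (GL (Fin 2) ℂ)) ≃*
        Equiv.Perm (Fin 4) × Multiplicative (ZMod 2)) := by
  obtain ⟨z, s, hz, hs, hT', hU'⟩ := oct_setup T U hT hU
  obtain ⟨h4, h3, r1, r2, r3, c1, c2, c3, n1, n2, n3⟩ := oct_rel hz hs hT' hU'
  have hneg : (-1 : GL (Fin 2) ℂ) ≠ 1 := by
    intro h
    have h := congrFun (congrFun (congrArg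
      (fun g : GL (Fin 2) ℂ => (g : Matrix (Fin 2) (Fin 2) ℂ)) h) 0) 0
    simp at h
    norm_num [neg_eq_iff_add_eq_zero] at h
  have h8 : U ^ 8 = 1 := by
    rw [show 8 = 4 * 2 from rfl, pow_mul, h4]; simp
  have hne : U ^ 4 ≠ 1 := by rw [h4]; exact hneg
  have ho : orderOf U = 8 := orderOf_eq_prime_pow (p := 2) (n := 2) hne h8
  obtain ⟨hc, hf⟩ := oct_abs h8 hne (by rw [h4]; simp) h3 r1 r2 r3 c1 c2 c3 n1 n2 n3
  rw [h4] at hf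
  have hUm : U ∈ (Subgroup.closure {T, U} : Subgroup (GL (Fin 2) ℂ)) :=
    Subgroup.subset_closure (by simp)
  have ho' : orderOf (⟨U, hUm⟩ : (Subgroup.closure {T, U} : Subgroup (GL (Fin 2) ℂ))) = 8 := by
    rw [← ho]; exact (Subgroup.orderOf_mk U hUm)
  refine ⟨ho, h4, hc, hf, ⟨_, ho'⟩, ?_⟩
  rintro ⟨φ⟩
  have h1 : orderOf (φ ⟨U, hUm⟩) = 8 := by rw [← ho']; exact MulEquiv.orderOf_eq φ _
  have hp : ∀ σ : Equiv.Perm (Fin 4), σ ^ 12 = 1 := by decide +kernel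
  have hq : ∀ x : Multiplicative (ZMod 2), x ^ 12 = 1 := by decide
  have h12 : (φ ⟨U, hUm⟩) ^ 12 = 1 := Prod.ext (hp _) (hq _)
  have := orderOf_dvd_of_pow_eq_one h12
  rw [h1] at this
  norm_num at this
end

section
/- Let M₁ = diag(e^{2πi/3}, e^{iπ/3}) and M₂ = diag(−e^{2πi/3}, −e^{iπ/3}) in GL(2, ℂ). Then: M₁ and M₂ each have order 6; the cyclic subgroups G₁ = ⟨M₁⟩ and G₂ = ⟨M₂⟩ are distinct; neither G₁ nor G₂ contains −Id (so the projection π : GL(2, ℂ) → PGL(2, ℂ) is injective on each); and π(G₁) = π(G₂). (Lemma: for the pair (K, B) = (ℤ/6, {x₁⁶ − x₀⁶ = 0}), K is splitting and has exactly these two liftings into ℤ/12 ⊂ GL(2, ℂ).) -/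
theorem aux_key_s11 (M : GL (Fin 2) ℂ) (z a : ℂ) (hz : IsPrimitiveRoot z 6) (ha : a ^ 6 = 1)
    (h : (M : Matrix (Fin 2) (Fin 2) ℂ) = Matrix.diagonal ![a * z, a]) :
    orderOf M = 6 ∧ (-1 : GL (Fin 2) ℂ) ∉ Subgroup.zpowers M ∧
    (∀ g ∈ Subgroup.zpowers M, projGL2 g = 1 → g = 1) := by
  have hz6 := hz.pow_eq_one
  have ha0 : a ≠ 0 := by rintro rfl; norm_num at ha
  have hpow : ∀ k : ℕ, ((M ^ k : GL (Fin 2) ℂ) : Matrix (Fin 2) (Fin 2) ℂ)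
      = Matrix.diagonal (![a * z, a] ^ k) := by
    intro k
    rw [Units.val_pow_eq_pow_val, h, Matrix.diagonal_pow]
  have h6 : M ^ 6 = 1 := by
    apply Units.ext
    rw [hpow 6, Units.val_one, ← Matrix.diagonal_one]
    congr 1
    funext i
    fin_cases i <;> simp [mul_pow, ha, hz6]
  have hfin : IsOfFinOrder M := isOfFinOrder_iff_pow_eq_one.2 ⟨6, by norm_num, h6⟩
  have hdvd : ∀ k : ℕ, M ^ k ∈ Subgroup.center (GL (Fin 2) ℂ) → 6 ∣ k := by
    intro k hk
    rw [Matrix.GeneralLinearGroup.mem_center_iff_val_eq_scalar] at hk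
    rw [← hz.pow_eq_one_iff_dvd]
    rw [hpow k] at hk
    obtain ⟨r, hr⟩ := hk
    have e0 := congrFun (congrFun hr 0) 0
    have e1 := congrFun (congrFun hr 1) 1
    simp [mul_pow] at e0 e1
    have : a ^ k * z ^ k = a ^ k * 1 := by rw [← e0, mul_one, ← e1]
    exact mul_left_cancel₀ (pow_ne_zero k ha0) this
  have hinj : ∀ g ∈ Subgroup.zpowers M, projGL2 g = 1 → g = 1 := by
    intro g hg hp
    rw [← hfin.mem_powers_iff_mem_zpowers] at hg
    obtain ⟨k, rfl⟩ := hg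
    have hc : M ^ k ∈ Subgroup.center (GL (Fin 2) ℂ) := (QuotientGroup.eq_one_iff _).1 hp
    obtain ⟨m, rfl⟩ := hdvd k hc
    simp [pow_mul, h6]
  refine ⟨?_, ?_, hinj⟩
  · apply Nat.dvd_antisymm (orderOf_dvd_of_pow_eq_one h6)
    apply hdvd
    rw [pow_orderOf_eq_one]
    exact one_mem _
  · intro hm
    have := hinj _ hm ((QuotientGroup.eq_one_iff _).2 (by
      rw [Subgroup.mem_center_iff]; intro g; simp))
    have e := congrArg (fun g : GL (Fin 2) ℂ => (g : Matrix (Fin 2) (Fin 2) ℂ) 0 0) this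
    simp at e
    norm_num [neg_eq_iff_add_eq_zero] at e

/-- Let `M₁ = diag(e^{2πi/3}, e^{iπ/3})` and `M₂ = diag(−e^{2πi/3}, −e^{iπ/3})` in
`GL(2, ℂ)`.  Then `M₁` and `M₂` each have order 6, the cyclic subgroups `G₁ = ⟨M₁⟩`
and `G₂ = ⟨M₂⟩` are distinct, neither contains `−Id` (so `π` is injective on each),
and `π(G₁) = π(G₂)`. -/
theorem two_liftings_Z6 (M₁ M₂ : GL (Fin 2) ℂ)
    (h₁ : (M₁ : Matrix (Fin 2) (Fin 2) ℂ) = Matrix.diagonal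
      ![Complex.exp (2 * Real.pi * Complex.I / 3), Complex.exp (Real.pi * Complex.I / 3)])
    (h₂ : (M₂ : Matrix (Fin 2) (Fin 2) ℂ) = Matrix.diagonal
      ![-Complex.exp (2 * Real.pi * Complex.I / 3), -Complex.exp (Real.pi * Complex.I / 3)]) :
    orderOf M₁ = 6 ∧ orderOf M₂ = 6 ∧
    Subgroup.zpowers M₁ ≠ Subgroup.zpowers M₂ ∧
    (-1 : GL (Fin 2) ℂ) ∉ Subgroup.zpowers M₁ ∧
    (-1 : GL (Fin 2) ℂ) ∉ Subgroup.zpowers M₂ ∧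
    (∀ g ∈ Subgroup.zpowers M₁, projGL2 g = 1 → g = 1) ∧
    (∀ g ∈ Subgroup.zpowers M₂, projGL2 g = 1 → g = 1) ∧
    Subgroup.map projGL2 (Subgroup.zpowers M₁) = Subgroup.map projGL2 (Subgroup.zpowers M₂) := by
  have hz : IsPrimitiveRoot (Complex.exp (Real.pi * Complex.I / 3)) 6 := by
    have := Complex.isPrimitiveRoot_exp 6 (by norm_num)
    convert this using 2
    push_cast
    ring
  have hsq : Complex.exp (2 * Real.pi * Complex.I / 3)
      = Complex.exp (Real.pi * Complex.I / 3) * Complex.exp (Real.pi * Complex.I / 3) := by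
    rw [← Complex.exp_add]
    congr 1
    ring
  rw [hsq] at h₁ h₂
  generalize Complex.exp (Real.pi * Complex.I / 3) = z at *
  have hz6 := hz.pow_eq_one
  have hz0 : z ≠ 0 := hz.ne_zero (by norm_num)
  obtain ⟨o1, n1, i1⟩ := aux_key_s11 M₁ z z hz hz6 h₁
  obtain ⟨o2, n2, i2⟩ := aux_key_s11 M₂ z (-z) hz (by rw [Even.neg_pow (by decide), hz6])
    (by rw [h₂, neg_mul])
  have hneg : M₂ = M₁ * (-1) := by
    apply Units.ext
    rw [mul_neg, mul_one, Units.val_neg, h₁, h₂, Matrix.diagonal_neg]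
    congr 1
    funext i
    fin_cases i <;> simp
  refine ⟨o1, o2, ?_, n1, n2, i1, i2, ?_⟩
  · intro h
    apply n1
    have hm : M₂ ∈ Subgroup.zpowers M₁ := h ▸ Subgroup.mem_zpowers M₂
    rw [hneg] at hm
    exact (Subgroup.mul_mem_cancel_left _ (Subgroup.mem_zpowers M₁)).1 hm
  · rw [MonoidHom.map_zpowers, MonoidHom.map_zpowers, hneg, map_mul]
    have : projGL2 (-1) = 1 := (QuotientGroup.eq_one_iff _).2 (by
      rw [Subgroup.mem_center_iff]; intro g; simp)
    rw [this, mul_one]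
end
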